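/- Let τ ∈ 𝕋², y ∈ [0,1], and δ ∈ ℂ² with Re(τ̄¹δ¹) < 0 and Re(τ̄²δ²) < 0. Then d := τ²δ¹(1−y) + τ¹δ²y ≠ 0, and for every t > 0 with τ + tδ ∈ 𝔻² one has φ_y(τ + tδ) = 1 + t·δ¹δ²/d. In particular lim_{t→0⁺} (φ_y(τ+tδ) − 1)/t = δ¹δ²/(τ²δ¹(1−y) + τ¹δ²y). -/

import Mathlib

open Complex Filter Set

/-- The scalar rational inner function `φ_y` associated to `τ ∈ 𝕋²` and `y ∈ [0,1]`. -/
noncomputable def phiy (τ : ℂ × ℂ) (y : ℝ) (z : ℂ × ℂ) : ℂ :=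
  (starRingEnd ℂ τ.1 * z.1 * (y : ℂ) + starRingEnd ℂ τ.2 * z.2 * (1 - (y : ℂ))
      - starRingEnd ℂ τ.1 * starRingEnd ℂ τ.2 * z.1 * z.2) /
    (1 - starRingEnd ℂ τ.1 * z.1 * (1 - (y : ℂ)) - starRingEnd ℂ τ.2 * z.2 * (y : ℂ))

theorem stmt7 (τ : ℂ × ℂ) (hτ1 : ‖τ.1‖ = 1) (hτ2 : ‖τ.2‖ = 1)
    (y : ℝ) (hy0 : 0 ≤ y) (hy1 : y ≤ 1)
    (δ : ℂ × ℂ) (hδ1 : (starRingEnd ℂ τ.1 * δ.1).re < 0)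
    (hδ2 : (starRingEnd ℂ τ.2 * δ.2).re < 0) :
    τ.2 * δ.1 * (1 - (y : ℂ)) + τ.1 * δ.2 * (y : ℂ) ≠ 0 ∧
    (∀ t : ℝ, 0 < t → ‖(τ.1 + (t : ℂ) * δ.1, τ.2 + (t : ℂ) * δ.2)‖ < 1 →
      phiy τ y (τ.1 + (t : ℂ) * δ.1, τ.2 + (t : ℂ) * δ.2) =
        1 + (t : ℂ) * δ.1 * δ.2 / (τ.2 * δ.1 * (1 - (y : ℂ)) + τ.1 * δ.2 * (y : ℂ))) ∧
    Tendsto (fun t : ℝ =>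
        (phiy τ y (τ.1 + (t : ℂ) * δ.1, τ.2 + (t : ℂ) * δ.2) - 1) / (t : ℂ))
      (nhdsWithin (0 : ℝ) (Set.Ioi 0))
      (nhds (δ.1 * δ.2 / (τ.2 * δ.1 * (1 - (y : ℂ)) + τ.1 * δ.2 * (y : ℂ)))) := by
  obtain ⟨p, q⟩ := τ
  obtain ⟨u, v⟩ := δ
  simp only at *
  have hp : starRingEnd ℂ p * p = 1 := by
    rw [Complex.conj_mul', hτ1]; norm_num
  have hq : starRingEnd ℂ q * q = 1 := by
    rw [Complex.conj_mul', hτ2]; norm_num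
  unfold phiy
  simp only
  generalize starRingEnd ℂ p = p' at *
  generalize starRingEnd ℂ q = q' at *
  have hE : p' * u * (1 - (y : ℂ)) + q' * v * (y : ℂ) ≠ 0 := by
    intro h
    have h2 := congrArg Complex.re h
    have e : p' * u * (1 - (y : ℂ)) + q' * v * (y : ℂ)
        = p' * u * ((1 - y : ℝ) : ℂ) + q' * v * (y : ℂ) := by push_cast; ring
    rw [e, Complex.add_re, Complex.re_mul_ofReal, Complex.re_mul_ofReal, Complex.zero_re] at h2
    rcases hy0.eq_or_lt with h0 | h0
    · subst h0; linarith
    · nlinarith [mul_pos h0 (neg_pos.2 hδ2), mul_nonneg (sub_nonneg.2 hy1) (neg_pos.2 hδ1).le]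
  have hDE : p' * u * (1 - (y : ℂ)) + q' * v * (y : ℂ)
      = p' * q' * (q * u * (1 - (y : ℂ)) + p * v * (y : ℂ)) := by
    linear_combination (-(p' * u * (1 - (y : ℂ)))) * hq - q' * v * (y : ℂ) * hp
  have hD : q * u * (1 - (y : ℂ)) + p * v * (y : ℂ) ≠ 0 := by
    intro h
    rw [h, mul_zero] at hDE
    exact hE hDE
  have key : ∀ t : ℝ, 0 < t →
      (p' * (p + (t : ℂ) * u) * (y : ℂ) + q' * (q + (t : ℂ) * v) * (1 - (y : ℂ))
        - p' * q' * (p + (t : ℂ) * u) * (q + (t : ℂ) * v)) /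
      (1 - p' * (p + (t : ℂ) * u) * (1 - (y : ℂ)) - q' * (q + (t : ℂ) * v) * (y : ℂ))
      = 1 + (t : ℂ) * u * v / (q * u * (1 - (y : ℂ)) + p * v * (y : ℂ)) := by
    intro t ht
    have ht' : (t : ℂ) ≠ 0 := by exact_mod_cast ht.ne'
    have hp1 : p' * (p + (t : ℂ) * u) = 1 + t * (p' * u) := by linear_combination hp
    have hq1 : q' * (q + (t : ℂ) * v) = 1 + t * (q' * v) := by linear_combination hq
    have hm : p' * q' * (p + (t : ℂ) * u) * (q + (t : ℂ) * v)
        = (1 + t * (p' * u)) * (1 + t * (q' * v)) := by rw [← hp1, ← hq1]; ring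
    have hden : 1 - (1 + t * (p' * u)) * (1 - (y : ℂ)) - (1 + t * (q' * v)) * (y : ℂ)
        = -t * (p' * u * (1 - (y : ℂ)) + q' * v * (y : ℂ)) := by ring
    have hnum : (1 + t * (p' * u)) * (y : ℂ) + (1 + t * (q' * v)) * (1 - (y : ℂ))
        - (1 + t * (p' * u)) * (1 + t * (q' * v))
        = -t * (p' * u * (1 - (y : ℂ)) + q' * v * (y : ℂ)) - t ^ 2 * (p' * q') * (u * v) := by ring
    have hpp : p' ≠ 0 := left_ne_zero_of_mul_eq_one hp
    have hqq : q' ≠ 0 := left_ne_zero_of_mul_eq_one hq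
    rw [hm, hp1, hq1, hden, hnum, hDE]
    generalize q * u * (1 - (y : ℂ)) + p * v * (y : ℂ) = D at *
    field_simp
    ring
  refine ⟨hD, fun t ht _ => key t ht, ?_⟩
  refine tendsto_const_nhds.congr' ?_
  filter_upwards [self_mem_nhdsWithin] with t ht
  have ht' : (t : ℂ) ≠ 0 := by exact_mod_cast (ne_of_gt ht)
  rw [key t ht]
  field_simp
  ring
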